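/- Let R be a probability distribution over a finite set X of attributes and S a probability distribution over a finite set Y of attributes, let Z = X ∩ Y, and suppose R and S are consistent, i.e., there is a probability distribution T over X ∪ Y with T[X] = R and T[Y] = S. Define the probability distribution R ⋈_P S over X ∪ Y by (R ⋈_P S)(t) = R(t[X])·S(t[Y])/S[Z](t[Z]) (with the convention 0/0 = 0). Let W(R,S) be the set of all probability distributions T over X ∪ Y with T[X] = R and T[Y] = S. Then R ⋈_P S belongs to W(R,S), every P ∈ W(R,S) satisfies H(P | Z) ≤ H(R ⋈_P S | Z), and any P ∈ W(R,S) with H(P | Z) = H(R ⋈_P S | Z) equals R ⋈_P S; that is, R ⋈_P S is the unique maximizer of conditional entropy given Z in W(R,S). -/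

import Mathlib

open Finsupp

variable {A : Type*} [DecidableEq A]

/-- An `X`-tuple: a function assigning to each attribute `a ∈ X` an element of its domain. -/
def Tup (dom : A → Type*) (X : Finset A) : Type _ := ∀ a ∈ X, dom a

/-- Projection (restriction) of an `X`-tuple to `Y ⊆ X`. -/
def restr (dom : A → Type*) {X Y : Finset A} (h : Y ⊆ X) (t : Tup dom X) : Tup dom Y :=
  fun a ha => t a (h ha)

/-- The marginal `R[Y]` of a `K`-relation `R` over `X`, for `Y ⊆ X`. -/
noncomputable def marg {dom : A → Type*} {K : Type*} [AddCommMonoid K] {X Y : Finset A}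
    (h : Y ⊆ X) (R : Tup dom X →₀ K) : Tup dom Y →₀ K :=
  Finsupp.mapDomain (restr dom h) R

/-- Equivalence up to normalization of two `K`-relations over the same attribute set. -/
def KEquiv {dom : A → Type*} {K : Type*} [MulZeroClass K] {X : Finset A}
    (R S : Tup dom X →₀ K) : Prop :=
  ∃ a b : K, a ≠ 0 ∧ b ≠ 0 ∧ ∀ t, a * R t = b * S t

/-- Merge an `X`-tuple and a `Y`-tuple into an `X ∪ Y`-tuple (values from the first argument
on `X`). -/
def merge {dom : A → Type*} {X Y : Finset A} (r : Tup dom X) (s : Tup dom Y) :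
    Tup dom (X ∪ Y) :=
  fun a ha => if h : a ∈ X then r a h else s a ((Finset.mem_union.mp ha).resolve_left h)

/-- The correcting factor `c_S(u) = ∏_{v ∈ S[Z]', v ≠ u} S[Z](v)`. -/
noncomputable def cFactor {dom : A → Type*} {K : Type*} [CommSemiring K] {Y Z : Finset A}
    (h : Z ⊆ Y) (S : Tup dom Y →₀ K) (u : Tup dom Z) : K :=
  haveI := Classical.decEq (Tup dom Z)
  ∏ v ∈ (marg h S).support.erase u, (marg h S) v

/-- The join of a `K`-relation over `X` and a `K`-relation over `Y`:
`(R ⋈ S)(t) = R(t[X])·S(t[Y])·c_S(t[X ∩ Y])`. -/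
noncomputable def kjoin {dom : A → Type*} {K : Type*} [CommSemiring K] {X Y : Finset A}
    (R : Tup dom X →₀ K) (S : Tup dom Y →₀ K) : Tup dom (X ∪ Y) →₀ K :=
  haveI := Classical.decEq (Tup dom (X ∪ Y))
  Finsupp.onFinset ((R.support ×ˢ S.support).image fun p => merge p.1 p.2)
    (fun t => R (restr dom Finset.subset_union_left t) *
      S (restr dom Finset.subset_union_right t) *
      cFactor Finset.inter_subset_right S (restr dom Finset.inter_subset_union t))
    (by
      intro t ht
      have hR : R (restr dom Finset.subset_union_left t) ≠ 0 :=
        left_ne_zero_of_mul (left_ne_zero_of_mul ht)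
      have hS : S (restr dom Finset.subset_union_right t) ≠ 0 :=
        right_ne_zero_of_mul (left_ne_zero_of_mul ht)
      refine Finset.mem_image.mpr ⟨(restr dom Finset.subset_union_left t,
        restr dom Finset.subset_union_right t),
        Finset.mem_product.mpr ⟨Finsupp.mem_support_iff.mpr hR, Finsupp.mem_support_iff.mpr hS⟩,
        ?_⟩
      funext a ha
      by_cases h : a ∈ X <;> simp [merge, restr, h])

/-- Two `K`-relations (over possibly different attribute sets) are consistent if a single
`K`-relation over the union has marginals equivalent to each of them. -/
def Consistent {dom : A → Type*} {K : Type*} [CommSemiring K] {X Y : Finset A}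
    (R : Tup dom X →₀ K) (S : Tup dom Y →₀ K) : Prop :=
  ∃ T : Tup dom (X ∪ Y) →₀ K,
    KEquiv (marg Finset.subset_union_left T) R ∧ KEquiv (marg Finset.subset_union_right T) S


/-- The probabilistic join: `(R ⋈_P S)(t) = R(t[X])·S(t[Y])/S[Z](t[Z])` with `0/0 = 0`
(division in the nonnegative reals is total, with zero denominator giving `0`). -/
noncomputable def joinP {A : Type*} [DecidableEq A] {dom : A → Type*} {X Y : Finset A}
    (R : Tup dom X →₀ NNReal) (S : Tup dom Y →₀ NNReal) : Tup dom (X ∪ Y) →₀ NNReal :=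
  haveI := Classical.decEq (Tup dom (X ∪ Y))
  Finsupp.onFinset ((R.support ×ˢ S.support).image fun p => merge p.1 p.2)
    (fun t => R (restr dom Finset.subset_union_left t) *
      S (restr dom Finset.subset_union_right t) /
      marg (Finset.inter_subset_right : X ∩ Y ⊆ Y) S (restr dom Finset.inter_subset_union t))
    (by
      intro t ht
      have h1 : R (restr dom Finset.subset_union_left t) *
          S (restr dom Finset.subset_union_right t) ≠ 0 := by
        intro h
        apply ht
        show R _ * S _ / _ = 0
        rw [h, zero_div]
      have hR := left_ne_zero_of_mul h1
      have hS := right_ne_zero_of_mul h1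
      refine Finset.mem_image.mpr ⟨(restr dom Finset.subset_union_left t,
        restr dom Finset.subset_union_right t),
        Finset.mem_product.mpr ⟨Finsupp.mem_support_iff.mpr hR,
          Finsupp.mem_support_iff.mpr hS⟩, ?_⟩
      funext a ha
      by_cases h : a ∈ X <;> simp [merge, restr, h])

/-- Shannon entropy of a finitely supported nonnegative real valued relation. -/
noncomputable def entropy {A : Type*} [DecidableEq A] {dom : A → Type*} {X : Finset A}
    (P : Tup dom X →₀ NNReal) : ℝ :=
  -∑ t ∈ P.support, (P t : ℝ) * Real.logb 2 (P t)


open Classical in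
/-- Conditional entropy of a distribution given the attributes in `Z`. -/
noncomputable def condEntropy {A : Type*} [DecidableEq A] {dom : A → Type*} {U Z : Finset A}
    (hZ : Z ⊆ U) (P : Tup dom U →₀ NNReal) : ℝ :=
  -∑ z ∈ (marg hZ P).support, (marg hZ P z : ℝ) *
    ∑ t ∈ P.support.filter (fun t => restr dom hZ t = z),
      ((P t : ℝ) / (marg hZ P z : ℝ)) * Real.logb 2 ((P t : ℝ) / (marg hZ P z : ℝ))

/-!
For a relation `P` over `X ∪ Y` with marginals `R` and `S`, the density of `P` with respect to
`R ⋈_P S` involves `R`, `S` and `S[Z]` only through their logarithms, so the relative entropy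
`D(P ‖ R ⋈_P S)` equals `H(R) + H(S) - H(S[Z]) - H(P)`. The relation `P = R ⋈_P S` itself makes the
left side vanish, and therefore `H(R ⋈_P S | Z) - H(P | Z) = D(P ‖ R ⋈_P S)`. Gibbs' inequality
finishes the proof.
-/

open scoped NNReal
open InformationTheory (klFun klFun_nonneg klFun_eq_zero_iff)

section Pushforward

variable {α β γ δ K : Type*}

lemma mapDomain_apply_ne_zero [AddCommMonoid K] [Subsingleton (AddUnits K)] (f : α → β)
    {P : α →₀ K} {a : α} (ha : P a ≠ 0) : P.mapDomain f (f a) ≠ 0 := by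
  classical
  rw [← mem_support_iff, mapDomain_support_of_subsingletonAddUnits]
  exact Finset.mem_image_of_mem f (mem_support_iff.mpr ha)

lemma mapDomain_apply_eq_sum_fiber [DecidableEq β] [AddCommMonoid K] (f : α → β) (P : α →₀ K)
    (b : β) : P.mapDomain f b = ∑ a ∈ P.support with f a = b, P a := by
  simp [mapDomain, sum, single_apply, Finset.sum_ite]

lemma sum_support_mul_comp (f : α → β) (P : α →₀ ℝ≥0) (φ : β → ℝ) :
    ∑ a ∈ P.support, P a * φ (f a) = ∑ b ∈ (P.mapDomain f).support, P.mapDomain f b * φ b :=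
  (sum_mapDomain_index (h := fun b (p : ℝ≥0) => p * φ b) (fun _ => by simp)
    (fun _ _ _ => by push_cast; ring)).symm

/- Through `g`, the fiber of `f` over `b` corresponds to the fiber of `q` over `p b`, on which the
values of `S` add up to the denominator. -/
lemma mapDomain_eq_of_eq_mul_div [Semifield K] [Subsingleton (AddUnits K)]
    {f : α → β} {g : α → γ} {p : β → δ} {q : γ → δ}
    (hcomm : ∀ a, p (f a) = q (g a)) (hglue : ∀ b c, p b = q c → ∃! a, f a = b ∧ g a = c)
    {R : β →₀ K} {S : γ →₀ K} (hRS : R.mapDomain p = S.mapDomain q)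
    {J : α →₀ K} (hJ : ∀ a, J a = R (f a) * S (g a) / S.mapDomain q (p (f a))) :
    J.mapDomain f = R := by
  classical
  ext b
  rw [mapDomain_apply_eq_sum_fiber]
  by_cases hb : R b = 0
  · rw [hb]
    refine Finset.sum_eq_zero fun a ha => ?_
    rw [hJ, (Finset.mem_filter.mp ha).2, hb, zero_mul, zero_div]
  have hden : S.mapDomain q (p b) ≠ 0 := hRS ▸ mapDomain_apply_ne_zero p hb
  calc ∑ a ∈ J.support with f a = b, J a
      = ∑ c ∈ S.support with q c = p b, R b * S c / S.mapDomain q (p b) := by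
        refine Finset.sum_nbij g ?_ ?_ ?_ ?_
        · intro a ha
          obtain ⟨haJ, rfl⟩ := Finset.mem_filter.mp ha
          refine Finset.mem_filter.mpr ⟨mem_support_iff.mpr fun hS => ?_, (hcomm a).symm⟩
          exact mem_support_iff.mp haJ (by rw [hJ, hS, mul_zero, zero_div])
        · intro a ha a' ha' h
          have ha := (Finset.mem_filter.mp ha).2
          have ha' := (Finset.mem_filter.mp ha').2
          exact (hglue b (g a) (ha ▸ hcomm a)).unique ⟨ha, rfl⟩ ⟨ha', h.symm⟩
        · intro c hc
          obtain ⟨hcS, hqc⟩ := Finset.mem_filter.mp hc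
          obtain ⟨a, ⟨rfl, rfl⟩, -⟩ := hglue b c hqc.symm
          refine ⟨a, Finset.mem_filter.mpr ⟨mem_support_iff.mpr ?_, rfl⟩, rfl⟩
          rw [hJ]
          exact div_ne_zero (mul_ne_zero hb (mem_support_iff.mp hcS)) hden
        · intro a ha
          rw [hJ, (Finset.mem_filter.mp ha).2]
    _ = R b * S.mapDomain q (p b) / S.mapDomain q (p b) := by
        rw [← Finset.sum_div, ← Finset.mul_sum, mapDomain_apply_eq_sum_fiber q]
    _ = R b := mul_div_cancel_right₀ _ hden

end Pushforward

section RelativeEntropy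

variable {α : Type*}

/-- The relative entropy (Kullback–Leibler divergence) `D(P ‖ Q)` in bits of finitely supported
nonnegative weights. It has this meaning only when the support of `P` is contained in that of `Q`:
the true value `∞` is otherwise replaced by a finite one. -/
noncomputable def relEntropy (P Q : α →₀ ℝ≥0) : ℝ :=
  ∑ a ∈ P.support, P a * Real.logb 2 (P a / Q a)

lemma relEntropy_self (P : α →₀ ℝ≥0) : relEntropy P P = 0 := by
  refine Finset.sum_eq_zero fun a ha => ?_
  have hPa : (P a : ℝ) ≠ 0 := NNReal.coe_ne_zero.mpr (mem_support_iff.mp ha)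
  rw [div_self hPa, Real.logb_one, mul_zero]

variable {P Q : α →₀ ℝ≥0}

lemma sum_mul_klFun_div (h : P.support ⊆ Q.support) :
    ∑ a ∈ Q.support, (Q a : ℝ) * klFun (P a / Q a) =
      Real.log 2 * relEntropy P Q + Q.degree - P.degree := by
  have hlog : Real.log 2 * relEntropy P Q =
      ∑ a ∈ Q.support, (P a : ℝ) * Real.log (P a / Q a) := by
    rw [relEntropy, Finset.mul_sum]
    calc ∑ a ∈ P.support, Real.log 2 * (P a * Real.logb 2 (P a / Q a))
        = ∑ a ∈ P.support, (P a : ℝ) * Real.log (P a / Q a) :=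
          Finset.sum_congr rfl fun a _ => by
            rw [Real.logb]
            field_simp
      _ = ∑ a ∈ Q.support, (P a : ℝ) * Real.log (P a / Q a) :=
          Finset.sum_subset h fun a _ ha => by
            rw [notMem_support_iff.mp ha, NNReal.coe_zero, zero_mul]
  have hP : (P.degree : ℝ) = ∑ a ∈ Q.support, (P a : ℝ) := by
    rw [degree_apply, Finset.sum_subset h fun a _ ha => notMem_support_iff.mp ha, NNReal.coe_sum]
  rw [hlog, hP, degree_apply, NNReal.coe_sum, ← Finset.sum_add_distrib, ← Finset.sum_sub_distrib]
  refine Finset.sum_congr rfl fun a ha => ?_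
  have hQa : (Q a : ℝ) ≠ 0 := NNReal.coe_ne_zero.mpr (mem_support_iff.mp ha)
  rw [klFun]
  field_simp

lemma mul_klFun_div_nonneg (p q : ℝ≥0) : 0 ≤ (q : ℝ) * klFun (p / q) :=
  mul_nonneg q.2 (klFun_nonneg (div_nonneg p.2 q.2))

lemma relEntropy_nonneg (h : P.support ⊆ Q.support) (hdeg : Q.degree ≤ P.degree) :
    0 ≤ relEntropy P Q := by
  have hsum : 0 ≤ ∑ a ∈ Q.support, (Q a : ℝ) * klFun (P a / Q a) :=
    Finset.sum_nonneg fun a _ => mul_klFun_div_nonneg (P a) (Q a)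
  rw [sum_mul_klFun_div h] at hsum
  have hmass : (Q.degree : ℝ) ≤ P.degree := NNReal.coe_le_coe.mpr hdeg
  have hlog : 0 ≤ Real.log 2 * relEntropy P Q := by linarith [hmass]
  exact nonneg_of_mul_nonneg_right hlog (Real.log_pos one_lt_two)

lemma relEntropy_eq_zero_iff (h : P.support ⊆ Q.support) (hdeg : Q.degree ≤ P.degree) :
    relEntropy P Q = 0 ↔ P = Q := by
  refine ⟨fun hzero => ?_, fun hPQ => hPQ ▸ relEntropy_self P⟩
  have hnonneg : ∀ a ∈ Q.support, 0 ≤ (Q a : ℝ) * klFun (P a / Q a) :=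
    fun a _ => mul_klFun_div_nonneg (P a) (Q a)
  have hsum : ∑ a ∈ Q.support, (Q a : ℝ) * klFun (P a / Q a) ≤ 0 := by
    rw [sum_mul_klFun_div h, hzero, mul_zero, zero_add, sub_nonpos]
    exact NNReal.coe_le_coe.mpr hdeg
  have hterm := (Finset.sum_eq_zero_iff_of_nonneg hnonneg).mp
    (hsum.antisymm (Finset.sum_nonneg hnonneg))
  ext a
  by_cases ha : a ∈ Q.support
  · have hQa : (Q a : ℝ) ≠ 0 := NNReal.coe_ne_zero.mpr (mem_support_iff.mp ha)
    have hkl : klFun (P a / Q a) = 0 := (mul_eq_zero.mp (hterm a ha)).resolve_left hQa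
    exact (div_eq_one_iff_eq hQa).mp ((klFun_eq_zero_iff (by positivity)).mp hkl)
  · rw [notMem_support_iff.mp ha, notMem_support_iff.mp fun hP => ha (h hP)]

end RelativeEntropy

section Marginals

variable {dom : A → Type*} {K : Type*} {U X Y Z : Finset A}

omit [DecidableEq A] in
lemma marg_marg [AddCommMonoid K] (hYX : Y ⊆ X) (hZY : Z ⊆ Y) (P : Tup dom X →₀ K) :
    marg hZY (marg hYX P) = marg (hZY.trans hYX) P :=
  (mapDomain_comp (f := restr dom hYX) (g := restr dom hZY)).symm

omit [DecidableEq A] in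
lemma degree_marg [AddCommMonoid K] (h : Y ⊆ X) (P : Tup dom X →₀ K) :
    (marg h P).degree = P.degree :=
  degree_mapDomain _ P

omit [DecidableEq A] in
lemma marg_restr_ne_zero [AddCommMonoid K] [Subsingleton (AddUnits K)] (h : Y ⊆ X)
    {P : Tup dom X →₀ K} {t : Tup dom X} (ht : P t ≠ 0) : marg h P (restr dom h t) ≠ 0 :=
  mapDomain_apply_ne_zero _ ht

lemma sum_mul_logb_marg (h : Y ⊆ X) (P : Tup dom X →₀ ℝ≥0) :
    ∑ t ∈ P.support, (P t : ℝ) * Real.logb 2 (marg h P (restr dom h t)) =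
      -entropy (marg h P) := by
  rw [entropy, neg_neg]
  exact sum_support_mul_comp (restr dom h) P fun u => Real.logb 2 (marg h P u)

lemma condEntropy_eq_entropy_sub_entropy_marg (h : Z ⊆ U) (P : Tup dom U →₀ ℝ≥0) :
    condEntropy h P = entropy P - entropy (marg h P) := by
  classical
  have hfiber : condEntropy h P = -∑ t ∈ P.support,
      (P t : ℝ) * Real.logb 2 (P t / marg h P (restr dom h t)) := by
    have hmaps : ∀ t ∈ P.support, restr dom h t ∈ (marg h P).support := fun t ht =>
      mem_support_iff.mpr (marg_restr_ne_zero h (mem_support_iff.mp ht))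
    rw [condEntropy, ← Finset.sum_fiberwise_of_maps_to hmaps]
    refine congrArg Neg.neg (Finset.sum_congr rfl fun z hz => ?_)
    have hz : (marg h P z : ℝ) ≠ 0 := NNReal.coe_ne_zero.mpr (mem_support_iff.mp hz)
    rw [Finset.mul_sum]
    refine Finset.sum_congr (by congr) fun t ht => ?_
    rw [(Finset.mem_filter.mp ht).2, ← mul_assoc, mul_div_cancel₀ _ hz]
  rw [hfiber, ← neg_neg (entropy (marg h P)), ← sum_mul_logb_marg, entropy, ← neg_sub',
    ← Finset.sum_sub_distrib]
  refine congrArg Neg.neg (Finset.sum_congr rfl fun t ht => ?_)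
  have hPt := mem_support_iff.mp ht
  rw [Real.logb_div (NNReal.coe_ne_zero.mpr hPt)
    (NNReal.coe_ne_zero.mpr (marg_restr_ne_zero h hPt)), mul_sub]

end Marginals

section Join

variable {dom : A → Type*} {X Y : Finset A}

lemma existsUnique_restr_union {r : Tup dom X} {s : Tup dom Y}
    (h : restr dom Finset.inter_subset_left r = restr dom Finset.inter_subset_right s) :
    ∃! t : Tup dom (X ∪ Y),
      restr dom Finset.subset_union_left t = r ∧ restr dom Finset.subset_union_right t = s := by
  refine ⟨merge r s, ⟨?_, ?_⟩, ?_⟩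
  · funext a ha
    simp [restr, merge, ha]
  · funext a ha
    by_cases hX : a ∈ X
    · simpa [restr, merge, hX] using congrFun (congrFun h a) (Finset.mem_inter.mpr ⟨hX, ha⟩)
    · simp [restr, merge, hX]
  · rintro t ⟨rfl, rfl⟩
    funext a ha
    by_cases hX : a ∈ X <;> simp [restr, merge, hX]

lemma joinP_apply (R : Tup dom X →₀ ℝ≥0) (S : Tup dom Y →₀ ℝ≥0) (t : Tup dom (X ∪ Y)) :
    joinP R S t = R (restr dom Finset.subset_union_left t) *
      S (restr dom Finset.subset_union_right t) /
      marg Finset.inter_subset_right S (restr dom Finset.inter_subset_union t) :=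
  rfl

lemma marg_left_joinP {R : Tup dom X →₀ ℝ≥0} {S : Tup dom Y →₀ ℝ≥0}
    (hRS : marg Finset.inter_subset_left R = marg Finset.inter_subset_right S) :
    marg Finset.subset_union_left (joinP R S) = R :=
  mapDomain_eq_of_eq_mul_div (f := restr dom (Finset.subset_union_left : X ⊆ X ∪ Y))
    (g := restr dom (Finset.subset_union_right : Y ⊆ X ∪ Y)) (fun _ => rfl)
    (fun _ _ => existsUnique_restr_union) hRS (joinP_apply R S)

lemma marg_right_joinP {R : Tup dom X →₀ ℝ≥0} {S : Tup dom Y →₀ ℝ≥0}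
    (hRS : marg Finset.inter_subset_left R = marg Finset.inter_subset_right S) :
    marg Finset.subset_union_right (joinP R S) = S :=
  mapDomain_eq_of_eq_mul_div (f := restr dom (Finset.subset_union_right : Y ⊆ X ∪ Y))
    (g := restr dom (Finset.subset_union_left : X ⊆ X ∪ Y)) (fun _ => rfl)
    (fun _ _ h => (existsUnique_congr fun _ => and_comm).mp (existsUnique_restr_union h.symm))
    hRS.symm fun t => by
      rw [joinP_apply, ← hRS, mul_comm (R _)]
      rfl

variable (P : Tup dom (X ∪ Y) →₀ ℝ≥0)

lemma marg_inter_left_eq_right :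
    marg (Finset.inter_subset_left : X ∩ Y ⊆ X) (marg Finset.subset_union_left P) =
      marg Finset.inter_subset_right (marg Finset.subset_union_right P) := by
  rw [marg_marg, marg_marg]

/-- The join `P[X] ⋈_P P[Y]` of the two marginals of a relation `P` over `X ∪ Y`, that is, the
relation with these marginals that makes them conditionally independent given `X ∩ Y`. -/
noncomputable def joinMarg : Tup dom (X ∪ Y) →₀ ℝ≥0 :=
  joinP (marg Finset.subset_union_left P) (marg Finset.subset_union_right P)

lemma joinMarg_apply (t : Tup dom (X ∪ Y)) :
    joinMarg P t = marg Finset.subset_union_left P (restr dom Finset.subset_union_left t) *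
      marg Finset.subset_union_right P (restr dom Finset.subset_union_right t) /
      marg Finset.inter_subset_union P (restr dom Finset.inter_subset_union t) := by
  rw [joinMarg, joinP_apply, marg_marg]

lemma marg_left_joinMarg :
    marg Finset.subset_union_left (joinMarg P) = marg Finset.subset_union_left P :=
  marg_left_joinP (marg_inter_left_eq_right P)

lemma marg_right_joinMarg :
    marg Finset.subset_union_right (joinMarg P) = marg Finset.subset_union_right P :=
  marg_right_joinP (marg_inter_left_eq_right P)

lemma marg_inter_joinMarg :
    marg (Finset.inter_subset_union : X ∩ Y ⊆ X ∪ Y) (joinMarg P) =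
      marg Finset.inter_subset_union P := by
  rw [← marg_marg Finset.subset_union_left Finset.inter_subset_left, marg_left_joinMarg, marg_marg]

lemma joinMarg_joinMarg : joinMarg (joinMarg P) = joinMarg P := by
  rw [joinMarg, marg_left_joinMarg, marg_right_joinMarg, joinMarg]

lemma degree_joinMarg : (joinMarg P).degree = P.degree := by
  rw [← degree_marg Finset.subset_union_left, marg_left_joinMarg, degree_marg]

lemma support_subset_support_joinMarg : P.support ⊆ (joinMarg P).support := by
  intro t ht
  have hPt := mem_support_iff.mp ht
  rw [mem_support_iff, joinMarg_apply]
  exact div_ne_zero (mul_ne_zero (marg_restr_ne_zero _ hPt) (marg_restr_ne_zero _ hPt))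
    (marg_restr_ne_zero _ hPt)

/- The right side is the conditional mutual information `I(X ; Y | X ∩ Y)`. -/
lemma relEntropy_joinMarg :
    relEntropy P (joinMarg P) =
      entropy (marg Finset.subset_union_left P) + entropy (marg Finset.subset_union_right P) -
        entropy (marg (Finset.inter_subset_union : X ∩ Y ⊆ X ∪ Y) P) - entropy P := by
  have hlog : ∀ t ∈ P.support, (P t : ℝ) * Real.logb 2 (P t / joinMarg P t) =
      P t * Real.logb 2 (P t) -
        P t * Real.logb 2
          (marg Finset.subset_union_left P (restr dom Finset.subset_union_left t)) -
        P t * Real.logb 2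
          (marg Finset.subset_union_right P (restr dom Finset.subset_union_right t)) +
        P t * Real.logb 2
          (marg Finset.inter_subset_union P (restr dom Finset.inter_subset_union t)) := by
    intro t ht
    have hPt : P t ≠ 0 := mem_support_iff.mp ht
    have hmarg {W : Finset A} (h : W ⊆ X ∪ Y) : (marg h P (restr dom h t) : ℝ) ≠ 0 :=
      NNReal.coe_ne_zero.mpr (marg_restr_ne_zero h hPt)
    rw [joinMarg_apply, NNReal.coe_div, NNReal.coe_mul,
      Real.logb_div (NNReal.coe_ne_zero.mpr hPt)
        (div_ne_zero (mul_ne_zero (hmarg _) (hmarg _)) (hmarg _)),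
      Real.logb_div (mul_ne_zero (hmarg _) (hmarg _)) (hmarg _), Real.logb_mul (hmarg _) (hmarg _)]
    ring
  rw [relEntropy, Finset.sum_congr rfl hlog, Finset.sum_add_distrib, Finset.sum_sub_distrib,
    Finset.sum_sub_distrib, sum_mul_logb_marg, sum_mul_logb_marg, sum_mul_logb_marg,
    ← neg_neg (∑ t ∈ P.support, _), ← entropy]
  ring

lemma condEntropy_joinMarg_sub_condEntropy :
    condEntropy (Finset.inter_subset_union : X ∩ Y ⊆ X ∪ Y) (joinMarg P) -
      condEntropy Finset.inter_subset_union P = relEntropy P (joinMarg P) := by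
  have hJ := relEntropy_joinMarg (joinMarg P)
  rw [joinMarg_joinMarg, relEntropy_self, marg_left_joinMarg, marg_right_joinMarg,
    marg_inter_joinMarg] at hJ
  rw [condEntropy_eq_entropy_sub_entropy_marg, condEntropy_eq_entropy_sub_entropy_marg,
    marg_inter_joinMarg, relEntropy_joinMarg]
  linarith

lemma condEntropy_le_condEntropy_joinMarg :
    condEntropy (Finset.inter_subset_union : X ∩ Y ⊆ X ∪ Y) P ≤
      condEntropy Finset.inter_subset_union (joinMarg P) := by
  rw [← sub_nonneg, condEntropy_joinMarg_sub_condEntropy]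
  exact relEntropy_nonneg (support_subset_support_joinMarg P) (degree_joinMarg P).le

lemma condEntropy_eq_condEntropy_joinMarg_iff :
    condEntropy (Finset.inter_subset_union : X ∩ Y ⊆ X ∪ Y) P =
      condEntropy Finset.inter_subset_union (joinMarg P) ↔ P = joinMarg P := by
  rw [eq_comm, ← sub_eq_zero, condEntropy_joinMarg_sub_condEntropy,
    relEntropy_eq_zero_iff (support_subset_support_joinMarg P) (degree_joinMarg P).le]

end Join

theorem statement8_general {dom : A → Type*} {X Y : Finset A}
    {R : Tup dom X →₀ ℝ≥0} {S : Tup dom Y →₀ ℝ≥0}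
    (hRS : marg Finset.inter_subset_left R = marg Finset.inter_subset_right S) :
    (marg Finset.subset_union_left (joinP R S) = R ∧
      marg Finset.subset_union_right (joinP R S) = S) ∧
    (∀ P : Tup dom (X ∪ Y) →₀ ℝ≥0,
      marg Finset.subset_union_left P = R → marg Finset.subset_union_right P = S →
      condEntropy (Finset.inter_subset_union : X ∩ Y ⊆ X ∪ Y) P ≤
        condEntropy Finset.inter_subset_union (joinP R S)) ∧
    (∀ P : Tup dom (X ∪ Y) →₀ ℝ≥0,
      marg Finset.subset_union_left P = R → marg Finset.subset_union_right P = S →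
      condEntropy (Finset.inter_subset_union : X ∩ Y ⊆ X ∪ Y) P =
        condEntropy Finset.inter_subset_union (joinP R S) → P = joinP R S) := by
  refine ⟨⟨marg_left_joinP hRS, marg_right_joinP hRS⟩, ?_, ?_⟩
  · rintro P rfl rfl
    exact condEntropy_le_condEntropy_joinMarg P
  · rintro P rfl rfl
    exact (condEntropy_eq_condEntropy_joinMarg_iff P).mp

/-- For consistent probability distributions, the probabilistic join is the unique maximizer
of conditional entropy given the common attributes, among all probability distributions
witnessing the consistency. -/
theorem statement8 {A : Type*} [DecidableEq A] (dom : A → Type*)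
    (X Y : Finset A) (R : Tup dom X →₀ NNReal) (S : Tup dom Y →₀ NNReal)
    (hR : ∑ t ∈ R.support, R t = 1) (hS : ∑ t ∈ S.support, S t = 1)
    (hcons : ∃ T : Tup dom (X ∪ Y) →₀ NNReal, (∑ t ∈ T.support, T t = 1) ∧
      marg Finset.subset_union_left T = R ∧ marg Finset.subset_union_right T = S) :
    ((∑ t ∈ (joinP R S).support, joinP R S t = 1) ∧
      marg Finset.subset_union_left (joinP R S) = R ∧
      marg Finset.subset_union_right (joinP R S) = S) ∧
    (∀ P : Tup dom (X ∪ Y) →₀ NNReal, (∑ t ∈ P.support, P t = 1) →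
      marg Finset.subset_union_left P = R → marg Finset.subset_union_right P = S →
      condEntropy (Finset.inter_subset_union : X ∩ Y ⊆ X ∪ Y) P ≤
        condEntropy Finset.inter_subset_union (joinP R S)) ∧
    (∀ P : Tup dom (X ∪ Y) →₀ NNReal, (∑ t ∈ P.support, P t = 1) →
      marg Finset.subset_union_left P = R → marg Finset.subset_union_right P = S →
      condEntropy (Finset.inter_subset_union : X ∩ Y ⊆ X ∪ Y) P =
        condEntropy Finset.inter_subset_union (joinP R S) → P = joinP R S) := by
  obtain ⟨T, -, rfl, rfl⟩ := hcons
  obtain ⟨⟨hX, hY⟩, hle, huniq⟩ := statement8_general (marg_inter_left_eq_right T)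
  exact ⟨⟨(degree_joinMarg T).trans ((degree_marg _ T).symm.trans hR), hX, hY⟩,
    fun P _ => hle P, fun P _ => huniq P⟩
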